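/- Let K be a field of characteristic zero and let I ⊂ S = K[x_1,…,x_n] be an artinian monomial ideal generated in a single degree d. Suppose there exist integers 1 ≤ i < j ≤ n such that for every monomial m of degree d in S, one has: x_i·x_j divides m if and only if m ∉ I. Then S/I has the strong Lefschetz property. -/

import Mathlib

open MvPolynomial

/-- The degree-`j` graded component of `S/I` (for `S = K[x_1,…,x_n]`), as a `K`-submodule of
the quotient: the image of the space of homogeneous polynomials of degree `j`.
For negative `j` it is the zero submodule. -/
noncomputable def gradedPiece {K : Type*} [Field K] {n : ℕ}
    (I : Ideal (MvPolynomial (Fin n) K)) (j : ℤ) :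
    Submodule K (MvPolynomial (Fin n) K ⧸ I) :=
  if 0 ≤ j then
    (homogeneousSubmodule (Fin n) K j.toNat).map (Ideal.Quotient.mkₐ K I).toLinearMap
  else ⊥

/-- A linear endomorphism `f` has maximal rank from `A` to `B` if it is injective on `A`
or maps `A` onto `B`. -/
def MaxRankOn {K M : Type*} [Field K] [AddCommGroup M] [Module K M]
    (f : M →ₗ[K] M) (A B : Submodule K M) : Prop :=
  (∀ x ∈ A, f x = 0 → x = 0) ∨ B ≤ A.map f


theorem aux_sparse {K : Type*} [Field K] [CharZero K] (m : ℕ) :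
    ∀ p : Polynomial K, p.support.card ≤ m → (1 + Polynomial.X) ^ m ∣ p → p = 0 := by
  induction m with
  | zero =>
    intro p hp _
    simpa using hp
  | succ m ih =>
    intro p hp hd
    by_contra hne
    obtain ⟨r, hr⟩ : p.support.Nonempty := by
      rwa [Polynomial.support_nonempty]
    set q : Polynomial K := Polynomial.X * Polynomial.derivative p - Polynomial.C (r : K) * p with hq
    have hcoef : ∀ b, q.coeff b = ((b : K) - r) * p.coeff b := by
      intro b
      rw [hq, Polynomial.coeff_sub, Polynomial.coeff_C_mul]
      cases b with
      | zero => simp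
      | succ b =>
        rw [Polynomial.coeff_X_mul, Polynomial.coeff_derivative]
        push_cast
        ring
    have hsub : q.support ⊆ p.support.erase r := by
      intro b hb
      rw [Polynomial.mem_support_iff, hcoef] at hb
      rw [Finset.mem_erase, Polynomial.mem_support_iff]
      refine ⟨?_, right_ne_zero_of_mul hb⟩
      rintro rfl
      simp at hb
    have hcard : q.support.card ≤ m := by
      have h1 := Finset.card_le_card hsub
      rw [Finset.card_erase_of_mem hr] at h1
      omega
    have hdq : (1 + Polynomial.X) ^ m ∣ q := by
      obtain ⟨u, hu⟩ := hd
      refine ⟨Polynomial.X * (((m : Polynomial K) + 1) * u + (1 + Polynomial.X) * Polynomial.derivative u)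
        - Polynomial.C (r : K) * (1 + Polynomial.X) * u, ?_⟩
      rw [hq, hu, Polynomial.derivative_mul, Polynomial.derivative_pow]
      simp
      ring
    have hq0 := ih q hcard hdq
    have hp0 : ∀ b, b ≠ r → p.coeff b = 0 := by
      intro b hb
      have := hcoef b
      rw [hq0, Polynomial.coeff_zero] at this
      rcases mul_eq_zero.1 this.symm with h | h
      · exact absurd (by exact_mod_cast sub_eq_zero.1 h) hb
      · exact h
    have hpe : p = Polynomial.monomial r (p.coeff r) := by
      ext b
      rw [Polynomial.coeff_monomial]
      split_ifs with h
      · rw [h]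
      · exact hp0 b (Ne.symm h)
    have hroot : p.eval (-1) = 0 := by
      obtain ⟨u, hu⟩ := hd
      rw [hu]; simp
    rw [hpe, Polynomial.eval_monomial] at hroot
    rcases mul_eq_zero.1 hroot with h | h
    · exact (Polynomial.mem_support_iff.1 hr) h
    · exact absurd h (pow_ne_zero _ (by simp))

/-- part of the exponent away from `i, j` -/
noncomputable def offPart {n : ℕ} (i j : Fin n) (s : Fin n →₀ ℕ) : Fin n →₀ ℕ :=
  (s.erase i).erase j

open Classical in
/-- block projection -/
noncomputable def blk (K : Type*) [Field K] {n : ℕ} (i j : Fin n) (r : Fin n →₀ ℕ) :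
    MvPolynomial (Fin n) K →ₗ[K] Polynomial K :=
  (basisMonomials (Fin n) K).constr K
    (fun s => if offPart i j s = r then Polynomial.X ^ (s j) else 0)

open Classical in
theorem blk_monomial {K : Type*} [Field K] {n : ℕ} (i j : Fin n) (r s : Fin n →₀ ℕ) (c : K) :
    blk K i j r (monomial s c) =
      if offPart i j s = r then Polynomial.monomial (s j) c else 0 := by
  have h : monomial s c = c • (basisMonomials (Fin n) K s) := by
    simp [smul_monomial]
  rw [h, map_smul, blk, Module.Basis.constr_basis]
  split_ifs
  · rw [← Polynomial.C_mul_X_pow_eq_monomial, Polynomial.smul_eq_C_mul]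
  · simp

theorem offPart_add_single_left {n : ℕ} (i j : Fin n) (s : Fin n →₀ ℕ) :
    offPart i j (s + Finsupp.single i 1) = offPart i j s := by
  ext a; simp only [offPart, Finsupp.erase_apply, Finsupp.add_apply, Finsupp.single_apply]
  grind

theorem offPart_add_single_right {n : ℕ} (i j : Fin n) (s : Fin n →₀ ℕ) :
    offPart i j (s + Finsupp.single j 1) = offPart i j s := by
  ext a; simp only [offPart, Finsupp.erase_apply, Finsupp.add_apply, Finsupp.single_apply]
  grind

theorem blk_mul {K : Type*} [Field K] {n : ℕ} (i j : Fin n) (hij : i ≠ j) (r : Fin n →₀ ℕ)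
    (p : MvPolynomial (Fin n) K) :
    blk K i j r ((X i + X j) * p) = (1 + Polynomial.X) * blk K i j r p := by
  induction p using MvPolynomial.induction_on' with
  | monomial s c =>
    rw [add_mul, map_add, X, X, monomial_mul, monomial_mul, add_comm (Finsupp.single i 1),
      add_comm (Finsupp.single j 1), blk_monomial, blk_monomial, blk_monomial,
      offPart_add_single_left, offPart_add_single_right]
    split_ifs
    · simp [hij, Polynomial.X_mul_monomial, add_mul]
    · simp
  | add p q hp hq => rw [mul_add, map_add, map_add, hp, hq, mul_add]

theorem blk_pow_mul {K : Type*} [Field K] {n : ℕ} (i j : Fin n) (hij : i ≠ j) (r : Fin n →₀ ℕ)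
    (k : ℕ) (p : MvPolynomial (Fin n) K) :
    blk K i j r ((X i + X j) ^ k * p) = (1 + Polynomial.X) ^ k * blk K i j r p := by
  induction k with
  | zero => simp
  | succ k ih => rw [pow_succ', mul_assoc, blk_mul i j hij, ih, pow_succ', mul_assoc]

theorem degree_off {n : ℕ} (i j : Fin n) (hij : i ≠ j) (s : Fin n →₀ ℕ) :
    s.degree = (offPart i j s).degree + s i + s j := by
  have h : s = offPart i j s + Finsupp.single i (s i) + Finsupp.single j (s j) := by
    ext a; simp only [offPart, Finsupp.erase_apply, Finsupp.add_apply, Finsupp.single_apply]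
    grind
  conv_lhs => rw [h]
  simp [map_add]

theorem off_inj {n : ℕ} (i j : Fin n) (hij : i ≠ j) (s t : Fin n →₀ ℕ)
    (h : offPart i j s = offPart i j t) (hj : s j = t j) (hd : s.degree = t.degree) : s = t := by
  have h1 := degree_off i j hij s
  have h2 := degree_off i j hij t
  rw [h] at h1
  have hi : s i = t i := by omega
  ext a
  have := DFunLike.congr_fun h a
  simp only [offPart, Finsupp.erase_apply] at this
  grind

open Classical in
theorem blk_coeff {K : Type*} [Field K] {n : ℕ} (i j : Fin n) (r : Fin n →₀ ℕ)
    (p : MvPolynomial (Fin n) K) (b : ℕ) :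
    (blk K i j r p).coeff b =
      ∑ s ∈ p.support, if offPart i j s = r ∧ s j = b then coeff s p else 0 := by
  conv_lhs => rw [p.as_sum]
  rw [map_sum, Polynomial.finsetSum_coeff]
  refine Finset.sum_congr rfl fun s _ => ?_
  rw [blk_monomial]
  by_cases h1 : offPart i j s = r <;> simp [h1, Polynomial.coeff_monomial]

theorem inj_core {K : Type*} [Field K] [CharZero K] {n : ℕ} (d e k : ℕ) (i j : Fin n)
    (hij : i ≠ j) (hk : 2 * e + k + 2 ≤ 2 * d) (f : MvPolynomial (Fin n) K)
    (hf : f.IsHomogeneous e)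
    (hI : ∀ s ∈ ((X i + X j) ^ k * f).support, d + s i ≤ s.degree ∨ d + s j ≤ s.degree) :
    f = 0 := by
  classical
  by_contra hne
  obtain ⟨s, hs⟩ : f.support.Nonempty := by
    rwa [Finset.nonempty_iff_ne_empty, Ne, support_eq_empty]
  have hdeg : ∀ t ∈ f.support, t.degree = e := fun t ht => by
    have := hf (mem_support_iff.1 ht)
    rw [Finsupp.degree_eq_weight_one]; exact this
  set r := offPart i j s with hr
  have hhom : ((X i + X j) ^ k * f).IsHomogeneous (k + e) := by
    have := ((isHomogeneous_X K i).add (isHomogeneous_X K j)).pow k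
    simpa using this.mul hf
  have hrd : r.degree + s i + s j = e := by rw [← hdeg s hs, degree_off i j hij s]
  have hsupp : (blk K i j r ((X i + X j) ^ k * f)).support ⊆
      Finset.range (k + e + 1 - d) ∪ Finset.Ico (d - r.degree) (k + e + 1 - r.degree) := by
    intro b hb
    rw [Polynomial.mem_support_iff, blk_coeff] at hb
    obtain ⟨t, ht, htn⟩ := Finset.exists_ne_zero_of_sum_ne_zero hb
    have hc : offPart i j t = r ∧ t j = b := by
      by_contra h; simp [h] at htn
    have h1 := hI t ht
    have h2 : t.degree = k + e := by
      have := hhom (mem_support_iff.1 ht)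
      rw [Finsupp.degree_eq_weight_one]; exact this
    have h3 := degree_off i j hij t
    rw [hc.1] at h3
    rw [Finset.mem_union, Finset.mem_range, Finset.mem_Ico]
    omega
  have hcard : (blk K i j r ((X i + X j) ^ k * f)).support.card ≤ k := by
    refine (Finset.card_le_card hsupp).trans ((Finset.card_union_le _ _).trans ?_)
    simp only [Finset.card_range, Nat.card_Ico]
    omega
  have h0 := aux_sparse k _ hcard ⟨_, blk_pow_mul i j hij r k f⟩
  rw [blk_pow_mul i j hij] at h0
  have hX : (1 + Polynomial.X : Polynomial K) ≠ 0 := by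
    intro h
    have := congrArg (Polynomial.eval 0) h
    simp at this
  have h1 : blk K i j r f = 0 := (mul_eq_zero.1 h0).resolve_left (pow_ne_zero _ hX)
  have h2 := blk_coeff i j r f (s j)
  rw [h1, Polynomial.coeff_zero, Finset.sum_eq_single s] at h2
  · simp [hr] at h2
    exact mem_support_iff.1 hs h2.symm
  · intro t ht hts
    rw [if_neg]
    rintro ⟨ha, hb⟩
    exact hts (off_inj i j hij t s (ha.trans hr) hb ((hdeg t ht).trans (hdeg s hs).symm))
  · intro h; exact absurd hs h

theorem exists_sub_degree {n : ℕ} (d : ℕ) (s : Fin n →₀ ℕ) (h : d ≤ s.degree) :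
    ∃ g ≤ s, g.degree = d := by
  induction d with
  | zero => exact ⟨0, by simp, by simp⟩
  | succ d ih =>
    obtain ⟨g, hg, hgd⟩ := ih (by omega)
    obtain ⟨a, ha⟩ : ∃ a, g a < s a := by
      by_contra! hcon
      have : s = g := le_antisymm (fun a => hcon a) hg
      rw [this] at h; omega
    refine ⟨g + Finsupp.single a 1, ?_, by simp [map_add, hgd]⟩
    intro b
    have := hg b
    simp only [Finsupp.add_apply, Finsupp.single_apply]
    split_ifs with h
    · subst h; omega
    · omega

theorem mem_char {K : Type*} [Field K] {n d : ℕ}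
    (I : Ideal (MvPolynomial (Fin n) K))
    (hmon : ∃ G : Set (Fin n →₀ ℕ), (∀ s ∈ G, (s.sum fun _ v => v) = d) ∧
      I = Ideal.span ((fun s => monomial s (1 : K)) '' G))
    (i j : Fin n) (hij : i ≠ j)
    (hiff : ∀ s : Fin n →₀ ℕ, (s.sum fun _ v => v) = d →
      ((X i * X j : MvPolynomial (Fin n) K) ∣ monomial s 1 ↔ monomial s (1 : K) ∉ I))
    (p : MvPolynomial (Fin n) K) :
    p ∈ I ↔ ∀ s ∈ p.support, d + s i ≤ s.degree ∨ d + s j ≤ s.degree := by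
  classical
  obtain ⟨G, hG, hIG⟩ := hmon
  have hdv : ∀ g : Fin n →₀ ℕ, (X i * X j : MvPolynomial (Fin n) K) ∣ monomial g 1 ↔
      (1 ≤ g i ∧ 1 ≤ g j) := by
    intro g
    rw [X, X, monomial_mul, monomial_dvd_monomial]
    simp only [one_ne_zero, false_or, mul_one, dvd_refl, and_true]
    constructor
    · intro h
      have h1 := h i
      have h2 := h j
      simp [Finsupp.single_apply, hij, hij.symm] at h1 h2
      exact ⟨by omega, by omega⟩
    · rintro ⟨h1, h2⟩ a
      simp only [Finsupp.add_apply, Finsupp.single_apply]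
      grind
  have hdeg : ∀ g : Fin n →₀ ℕ, (g.sum fun _ v => v) = g.degree := fun g => rfl
  have key : ∀ (a : Fin n) (s : Fin n →₀ ℕ), (s.erase a).degree + s a = s.degree := by
    intro a s
    conv_rhs => rw [← Finsupp.erase_add_single a s]
    simp [map_add]
  have back : ∀ (a : Fin n) (s : Fin n →₀ ℕ), (a = i ∨ a = j) → d + s a ≤ s.degree →
      ∃ g ∈ G, g ≤ s := by
    intro a s ha h
    have hk := key a s
    obtain ⟨g, hg, hgd⟩ := exists_sub_degree d (s.erase a) (by omega)
    have hga : g a = 0 := by simpa using hg a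
    have hmem : monomial g (1 : K) ∈ I := by
      by_contra hcon
      have := (hdv g).1 ((hiff g hgd).2 hcon)
      rcases ha with rfl | rfl <;> omega
    rw [hIG, mem_ideal_span_monomial_image] at hmem
    obtain ⟨g', hg', hle⟩ := hmem g (by simp)
    refine ⟨g', hg', fun b => (hle b).trans ((hg b).trans ?_)⟩
    rw [Finsupp.erase_apply]; split_ifs <;> simp
  have forw : ∀ (a : Fin n) (g s : Fin n →₀ ℕ), g.degree = d → g ≤ s → g a = 0 →
      d + s a ≤ s.degree := by
    intro a g s hgd hle hga
    have hk := key a s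
    have : g ≤ s.erase a := by
      intro b
      rw [Finsupp.erase_apply]
      split_ifs with h
      · rw [h, hga]
      · exact hle b
    have := Finsupp.degree_mono this
    omega
  rw [hIG, mem_ideal_span_monomial_image]
  refine forall₂_congr fun s _ => ?_
  constructor
  · rintro ⟨g, hg, hle⟩
    have hgI : monomial g (1 : K) ∈ I := by
      rw [hIG]; exact Ideal.subset_span ⟨g, hg, rfl⟩
    have hnd : ¬ (X i * X j : MvPolynomial (Fin n) K) ∣ monomial g 1 :=
      fun h => (hiff g (hG g hg)).1 h hgI
    rw [hdv] at hnd
    by_cases h : g i = 0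
    · exact Or.inl (forw i g s (hG g hg) hle h)
    · exact Or.inr (forw j g s (hG g hg) hle (by omega))
  · rintro (h | h)
    · exact back i s (Or.inl rfl) h
    · exact back j s (Or.inr rfl) h

theorem mem_gp {K : Type*} [Field K] {n : ℕ} (I : Ideal (MvPolynomial (Fin n) K)) (e : ℕ)
    (x : MvPolynomial (Fin n) K ⧸ I) :
    x ∈ gradedPiece I (e : ℤ) ↔ ∃ p : MvPolynomial (Fin n) K, p.IsHomogeneous e ∧
      Ideal.Quotient.mk I p = x := by
  rw [gradedPiece, if_pos (by positivity), Submodule.mem_map]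
  simp [mem_homogeneousSubmodule]

/-- Let `I ⊆ K[x_1,…,x_n]` be an artinian monomial ideal generated in the
single degree `d` (`K` of characteristic zero). If there are `i < j` such that for every
degree-`d` monomial `m`, `x_i x_j ∣ m` if and only if `m ∉ I`, then `S/I` has the strong
Lefschetz property. -/
theorem SLP_for_monomial_ideals_determined_by_xixj_divisibility
    (K : Type*) [Field K] [CharZero K] (n d : ℕ)
    (I : Ideal (MvPolynomial (Fin n) K))
    (hart : Module.Finite K (MvPolynomial (Fin n) K ⧸ I))
    (hmon : ∃ G : Set (Fin n →₀ ℕ), (∀ s ∈ G, (s.sum fun _ v => v) = d) ∧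
      I = Ideal.span ((fun s => monomial s (1 : K)) '' G))
    (i j : Fin n) (hij : i < j)
    (hiff : ∀ s : Fin n →₀ ℕ, (s.sum fun _ v => v) = d →
      ((X i * X j : MvPolynomial (Fin n) K) ∣ monomial s 1 ↔ monomial s (1 : K) ∉ I)) :
    ∃ ℓ : MvPolynomial (Fin n) K, ℓ.IsHomogeneous 1 ∧
      ∀ (jdeg : ℤ) (k : ℕ),
        MaxRankOn (LinearMap.mulLeft K ((Ideal.Quotient.mk I ℓ) ^ k))
          (gradedPiece I jdeg) (gradedPiece I (jdeg + k)) := by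
  classical
  have hne : i ≠ j := hij.ne
  have hchar := mem_char I hmon i j hne hiff
  have hl : (X i + X j : MvPolynomial (Fin n) K).IsHomogeneous 1 :=
    (isHomogeneous_X K i).add (isHomogeneous_X K j)
  set ℓ : MvPolynomial (Fin n) K := X i + X j with hℓ
  set L := Ideal.Quotient.mk I ℓ with hL
  have hinj : ∀ e k : ℕ, 2 * e + k + 2 ≤ 2 * d → ∀ x ∈ gradedPiece I (e : ℤ),
      LinearMap.mulLeft K (L ^ k) x = 0 → x = 0 := by
    intro e k hk x hx h0
    obtain ⟨p, hp, rfl⟩ := (mem_gp I e x).1 hx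
    rw [LinearMap.mulLeft_apply, hL, ← map_pow, ← map_mul, Ideal.Quotient.eq_zero_iff_mem,
      hchar] at h0
    rw [inj_core d e k i j hne hk p hp h0, map_zero]
  have hmap : ∀ e k : ℕ, ∀ x ∈ gradedPiece I (e : ℤ),
      L ^ k * x ∈ gradedPiece I ((e + k : ℕ) : ℤ) := by
    intro e k x hx
    obtain ⟨p, hp, rfl⟩ := (mem_gp I e x).1 hx
    refine (mem_gp I _ _).2 ⟨ℓ ^ k * p, ?_, by simp [hL]⟩
    have := (hl.pow k).mul hp
    rwa [one_mul, add_comm] at this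
  refine ⟨ℓ, hl, ?_⟩
  intro jdeg k
  by_cases hj : 0 ≤ jdeg
  swap
  · left
    intro x hx _
    rw [gradedPiece, if_neg hj] at hx
    simpa using hx
  lift jdeg to ℕ using hj with e
  by_cases hcase : 2 * e + k + 2 ≤ 2 * d
  · exact Or.inl (hinj e k hcase)
  right
  rw [← Nat.cast_add]
  intro y hy
  -- all monomials outside the ideal
  have hout : ∀ s : Fin n →₀ ℕ, Ideal.Quotient.mk I (monomial s (1 : K)) ≠ 0 →
      s.degree + 1 ≤ d + s i ∧ s.degree + 1 ≤ d + s j := by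
    intro s hs
    by_contra hcon
    refine hs ?_
    rw [Ideal.Quotient.eq_zero_iff_mem, hchar]
    intro t ht
    have : t = s := by simpa using support_monomial_subset ht
    subst this
    omega
  -- reduction to monomials
  have hred : ∀ (T : ℕ) (M : Submodule K (MvPolynomial (Fin n) K ⧸ I)),
      (∀ s : Fin n →₀ ℕ, s.degree = T → s.degree + 1 ≤ d + s i → s.degree + 1 ≤ d + s j →
        Ideal.Quotient.mk I (monomial s (1 : K)) ∈ M) → gradedPiece I (T : ℤ) ≤ M := by
    intro T M hM x hx
    obtain ⟨p, hp, rfl⟩ := (mem_gp I T x).1 hx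
    rw [p.as_sum, map_sum]
    refine Submodule.sum_mem _ fun s hs => ?_
    have h2 : s.degree = T := by
      have := hp (mem_support_iff.1 hs)
      rw [Finsupp.degree_eq_weight_one]; exact this
    have h3 : Ideal.Quotient.mk I (monomial s (coeff s p)) =
        coeff s p • Ideal.Quotient.mk I (monomial s (1 : K)) := by
      have h4 : (monomial s (coeff s p) : MvPolynomial (Fin n) K) =
        coeff s p • monomial s (1 : K) := by simp [smul_monomial]
      rw [h4]; rfl
    rw [h3]
    refine M.smul_mem _ ?_
    by_cases h0 : Ideal.Quotient.mk I (monomial s (1 : K)) = 0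
    · rw [h0]; exact M.zero_mem
    · exact hM s h2 (hout s h0).1 (hout s h0).2
  by_cases hT : e + k + 2 ≤ 2 * d
  swap
  · have : y ∈ (⊥ : Submodule K (MvPolynomial (Fin n) K ⧸ I)) := by
      refine hred (e + k) ⊥ ?_ hy
      intro s hs h1 h2
      have := degree_off i j hne s
      omega
    rw [Submodule.mem_bot] at this
    rw [this]; exact Submodule.zero_mem _
  obtain ⟨e', he'⟩ : ∃ e', e' + (e + k) + 2 = 2 * d := ⟨2 * d - 2 - (e + k), by omega⟩
  obtain ⟨c, hc⟩ : ∃ c, e = e' + c := ⟨e - e', by omega⟩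
  obtain ⟨δ, hδ⟩ : ∃ δ, e' + δ + 1 = d := ⟨d - 1 - e', by omega⟩
  set Q := Ideal.Quotient.mk I ((X i * X j) ^ δ) with hQ
  have hle1 : gradedPiece I ((e + k : ℕ) : ℤ) ≤
      (gradedPiece I (e' : ℤ)).map (LinearMap.mulLeft K Q) := by
    refine hred _ _ ?_
    intro s hs h1 h2
    set u : Fin n →₀ ℕ := Finsupp.single i δ + Finsupp.single j δ with hu
    have hus : u ≤ s := by
      intro a
      simp only [hu, Finsupp.add_apply, Finsupp.single_apply]
      grind
    have hsu : u + (s - u) = s := add_tsub_cancel_of_le hus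
    refine Submodule.mem_map.2 ⟨Ideal.Quotient.mk I (monomial (s - u) 1),
      (mem_gp I _ _).2 ⟨_, isHomogeneous_monomial 1 ?_, rfl⟩, ?_⟩
    · have h5 : u.degree + (s - u).degree = s.degree := by rw [← map_add, hsu]
      have h6 : u.degree = δ + δ := by simp [hu, map_add]
      omega
    · rw [LinearMap.mulLeft_apply, hQ, ← map_mul]
      congr 1
      rw [mul_pow, X_pow_eq_monomial, X_pow_eq_monomial, monomial_mul, monomial_mul, ← hu, hsu]
      simp
  have hle2 : (gradedPiece I (e' : ℤ)).map (LinearMap.mulLeft K (L ^ (c + k))) ≤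
      gradedPiece I ((e + k : ℕ) : ℤ) := by
    rintro _ ⟨x, hx, rfl⟩
    have := hmap e' (c + k) x hx
    rwa [← add_assoc, ← hc] at this
  have hfr : Module.finrank K ((gradedPiece I (e' : ℤ)).map (LinearMap.mulLeft K (L ^ (c + k)))) =
      Module.finrank K (gradedPiece I (e' : ℤ)) := by
    have hI' := hinj e' (c + k) (by omega)
    have := LinearMap.finrank_range_of_inj
      (f := (LinearMap.mulLeft K (L ^ (c + k))).domRestrict (gradedPiece I (e' : ℤ))) (by
        rw [← LinearMap.ker_eq_bot, LinearMap.ker_eq_bot']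
        rintro ⟨x, hx⟩ h
        exact Subtype.ext (hI' x hx h))
    rwa [LinearMap.range_domRestrict] at this
  have heq := Submodule.eq_of_le_of_finrank_le hle2 (by
    rw [hfr]
    exact (Submodule.finrank_mono hle1).trans (Submodule.finrank_map_le _ _))
  rw [← heq] at hy
  obtain ⟨x, hx, rfl⟩ := hy
  refine ⟨L ^ c * x, ?_, ?_⟩
  · have := hmap e' c x hx
    rwa [← hc] at this
  · simp only [LinearMap.mulLeft_apply]
    ring
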